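/- Let T be a torsion class in mod Λ and M an indecomposable module not in T such that every proper factor of M belongs to T. Let N be a module in Filt(T ∪ {M}) but not in T such that every proper factor of N lies in T. If Filt(T ∪ {M}) covers T in tors Λ, then N is isomorphic to M. -/

import Mathlib

/-!
Common definitions: the category `mod Λ` of finite(-dimensional) left `Λ`-modules,
torsion(-free) classes, filtration closures, bricks, minimal (co-)extending modules,
and the lattice-theoretic notions for `tors Λ` (ordered by containment).
-/

/-- A bundled (left) `Λ`-module with carrier in `Type`. -/
structure Mdl (Λ : Type) [Ring Λ] : Type 1 where
  carrier : Type
  [isAddCommGroup : AddCommGroup carrier]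
  [isModule : Module Λ carrier]

attribute [instance] Mdl.isAddCommGroup Mdl.isModule

instance {Λ : Type} [Ring Λ] : CoeSort (Mdl Λ) Type :=
  ⟨Mdl.carrier⟩

variable (Λ : Type) [Ring Λ]

/-- Bundle a module. -/
def Mdl.of (X : Type) [AddCommGroup X] [Module Λ X] : Mdl Λ :=
  { carrier := X }

/-- `M` and `N` are isomorphic `Λ`-modules. -/
def MIso (M N : Mdl Λ) : Prop :=
  Nonempty (M.carrier ≃ₗ[Λ] N.carrier)

/-- `N` is a factor (quotient) module of `M`. -/
def IsFactor (M N : Mdl Λ) : Prop :=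
  ∃ f : M.carrier →ₗ[Λ] N.carrier, Function.Surjective f

/-- `N` is a proper factor of `M` (a quotient by a nonzero submodule). -/
def IsProperFactor (M N : Mdl Λ) : Prop :=
  ∃ f : M.carrier →ₗ[Λ] N.carrier, Function.Surjective f ∧ ¬ Function.Injective f

/-- `N` is (isomorphic to) a submodule of `M`. -/
def IsSubmoduleOf (N M : Mdl Λ) : Prop :=
  ∃ f : N.carrier →ₗ[Λ] M.carrier, Function.Injective f

/-- `N` is (isomorphic to) a proper submodule of `M`. -/
def IsProperSubmoduleOf (N M : Mdl Λ) : Prop :=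
  ∃ f : N.carrier →ₗ[Λ] M.carrier, Function.Injective f ∧ ¬ Function.Surjective f

/-- `D` is (isomorphic to) a direct summand of `N`. -/
def IsSummand (D N : Mdl Λ) : Prop :=
  ∃ (i : D.carrier →ₗ[Λ] N.carrier) (p : N.carrier →ₗ[Λ] D.carrier),
    p.comp i = LinearMap.id

/-- `0 → A --f--> M --g--> B → 0` is a short exact sequence. -/
def IsSES {A M B : Mdl Λ} (f : A.carrier →ₗ[Λ] M.carrier)
    (g : M.carrier →ₗ[Λ] B.carrier) : Prop :=
  Function.Injective f ∧ Function.Surjective g ∧ LinearMap.range f = LinearMap.ker g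

/-- The short exact sequence `0 → A --f--> M --g--> B → 0` splits. -/
def SplitsSES {A M B : Mdl Λ} (_f : A.carrier →ₗ[Λ] M.carrier)
    (g : M.carrier →ₗ[Λ] B.carrier) : Prop :=
  ∃ s : B.carrier →ₗ[Λ] M.carrier, g.comp s = LinearMap.id

/-- `M` is an extension of `B` by `A`, i.e. there is a s.e.s. `0 → A → M → B → 0`. -/
def ExtOf (M A B : Mdl Λ) : Prop :=
  ∃ (f : A.carrier →ₗ[Λ] M.carrier) (g : M.carrier →ₗ[Λ] B.carrier), IsSES Λ f g

/-- A torsion class in `mod Λ`: a class of finite(-dimensional) modules containing `0`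
and closed under isomorphisms, factor modules and extensions. -/
structure IsTorsionClass (T : Set (Mdl Λ)) : Prop where
  fin : ∀ M ∈ T, Module.Finite Λ M.carrier
  zero_mem : ∀ M : Mdl Λ, Subsingleton M.carrier → M ∈ T
  iso_closed : ∀ M ∈ T, ∀ N : Mdl Λ, MIso Λ M N → N ∈ T
  factor_closed : ∀ M ∈ T, ∀ N : Mdl Λ, IsFactor Λ M N → N ∈ T
  ext_closed : ∀ A ∈ T, ∀ B ∈ T, ∀ M : Mdl Λ, ExtOf Λ M A B → M ∈ T

/-- A torsion-free class in `mod Λ`: a class of finite(-dimensional) modules containing `0`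
and closed under isomorphisms, submodules and extensions. -/
structure IsTorsionFreeClass (F : Set (Mdl Λ)) : Prop where
  fin : ∀ M ∈ F, Module.Finite Λ M.carrier
  zero_mem : ∀ M : Mdl Λ, Subsingleton M.carrier → M ∈ F
  iso_closed : ∀ M ∈ F, ∀ N : Mdl Λ, MIso Λ M N → N ∈ F
  sub_closed : ∀ M ∈ F, ∀ N : Mdl Λ, IsSubmoduleOf Λ N M → N ∈ F
  ext_closed : ∀ A ∈ F, ∀ B ∈ F, ∀ M : Mdl Λ, ExtOf Λ M A B → M ∈ F

/-- `Filt S M`: `M` admits a filtration `0 = M₀ ⊆ M₁ ⊆ ⋯ ⊆ M_l = M` whose successive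
quotients are isomorphic to modules in `S`. -/
inductive Filt (S : Set (Mdl Λ)) : Mdl Λ → Prop
  | of_subsingleton (M : Mdl Λ) (h : Subsingleton M.carrier) : Filt S M
  | step (M : Mdl Λ) (N : Submodule Λ M.carrier) (X : Mdl Λ) (hX : X ∈ S)
      (hN : Filt S (Mdl.of Λ N)) (e : Nonempty ((M.carrier ⧸ N) ≃ₗ[Λ] X.carrier)) :
      Filt S M

/-- The filtration closure `Filt(S)` as a set of modules. -/
def FiltSet (S : Set (Mdl Λ)) : Set (Mdl Λ) := {M | Filt Λ S M}

/-- `Gen(M)`: the class of factor modules of finite direct sums of copies of `M`. -/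
def GenSet (M : Mdl Λ) : Set (Mdl Λ) :=
  {N | ∃ (n : ℕ) (f : (Fin n → M.carrier) →ₗ[Λ] N.carrier), Function.Surjective f}

/-- `T^⊥ = {X ∈ mod Λ : Hom_Λ(N, X) = 0 for all N ∈ T}`. -/
def Perp (T : Set (Mdl Λ)) : Set (Mdl Λ) :=
  {X | Module.Finite Λ X.carrier ∧ ∀ N ∈ T, ∀ f : N.carrier →ₗ[Λ] X.carrier, f = 0}

/-- A brick: a module (in `mod Λ`) whose endomorphism ring is a division ring,
i.e. it is nonzero and every nonzero endomorphism is invertible. -/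
def IsBrick (M : Mdl Λ) : Prop :=
  Module.Finite Λ M.carrier ∧ Nontrivial M.carrier ∧
    ∀ f : M.carrier →ₗ[Λ] M.carrier, f ≠ 0 → Function.Bijective f

/-- An indecomposable module: nonzero, and not the direct sum of two nonzero submodules. -/
def Indec (M : Mdl Λ) : Prop :=
  Nontrivial M.carrier ∧
    ∀ p q : Submodule Λ M.carrier, IsCompl p q → p = ⊥ ∨ q = ⊥

/-- `M` is a minimal extending module for the torsion class `T`:
(P1) every proper factor of `M` is in `T`;
(P2) if `0 → M → X → N → 0` is non-split exact with `N ∈ T`, then `X ∈ T`;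
(P3) `Hom_Λ(T, M) = 0`. -/
structure IsMinExt (T : Set (Mdl Λ)) (M : Mdl Λ) : Prop where
  fin : Module.Finite Λ M.carrier
  p1 : ∀ N : Mdl Λ, IsProperFactor Λ M N → N ∈ T
  p2 : ∀ (X N : Mdl Λ) (f : M.carrier →ₗ[Λ] X.carrier) (g : X.carrier →ₗ[Λ] N.carrier),
      IsSES Λ f g → ¬ SplitsSES Λ f g → N ∈ T → X ∈ T
  p3 : ∀ N ∈ T, ∀ f : N.carrier →ₗ[Λ] M.carrier, f = 0

/-- `M` is a minimal co-extending module for the torsion-free class `F`: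
(P1') every proper submodule of `M` is in `F`;
(P2') if `0 → F' → X → M → 0` is non-split exact with `F' ∈ F`, then `X ∈ F`;
(P3') `Hom_Λ(M, F) = 0`. -/
structure IsMinCoExt (F : Set (Mdl Λ)) (M : Mdl Λ) : Prop where
  fin : Module.Finite Λ M.carrier
  p1 : ∀ N : Mdl Λ, IsProperSubmoduleOf Λ N M → N ∈ F
  p2 : ∀ (X F' : Mdl Λ) (f : F'.carrier →ₗ[Λ] X.carrier) (g : X.carrier →ₗ[Λ] M.carrier),
      IsSES Λ f g → ¬ SplitsSES Λ f g → F' ∈ F → X ∈ F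
  p3 : ∀ F' ∈ F, ∀ f : M.carrier →ₗ[Λ] F'.carrier, f = 0

/-- `T'` covers `T` in the lattice `tors Λ` of torsion classes ordered by containment. -/
def TorsCovers (T' T : Set (Mdl Λ)) : Prop :=
  IsTorsionClass Λ T' ∧ IsTorsionClass Λ T ∧ T ⊂ T' ∧
    ∀ Y : Set (Mdl Λ), IsTorsionClass Λ Y → T ⊂ Y → Y ⊆ T' → Y = T'

/-- `F'` covers `F` in the lattice `torf Λ` of torsion-free classes ordered by containment. -/
def TorfCovers (F' F : Set (Mdl Λ)) : Prop :=
  IsTorsionFreeClass Λ F' ∧ IsTorsionFreeClass Λ F ∧ F ⊂ F' ∧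
    ∀ Y : Set (Mdl Λ), IsTorsionFreeClass Λ Y → F ⊂ Y → Y ⊆ F' → Y = F'

/-- The join `⋁ A` of a family of torsion classes in `tors Λ`: the smallest torsion
class containing all members of `A`. -/
def TorsJoin (A : Set (Set (Mdl Λ))) : Set (Mdl Λ) :=
  ⋂₀ {T : Set (Mdl Λ) | IsTorsionClass Λ T ∧ ∀ S ∈ A, S ⊆ T}

/-- A completely join-irreducible element of `tors Λ`: a torsion class `T` such that
`T ∈ A` whenever `A` is a set of torsion classes with `⋁ A = T`. -/
def CompletelyJoinIrred (T : Set (Mdl Λ)) : Prop :=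
  IsTorsionClass Λ T ∧
    ∀ A : Set (Set (Mdl Λ)), (∀ S ∈ A, IsTorsionClass Λ S) → TorsJoin Λ A = T → T ∈ A

/-- The join representation `⋁ A` is irredundant in `tors Λ`:
every proper subset has strictly smaller join. -/
def TorsIrredundant (A : Set (Set (Mdl Λ))) : Prop :=
  ∀ B : Set (Set (Mdl Λ)), B ⊂ A → TorsJoin Λ B ⊂ TorsJoin Λ A

/-- `A` is the canonical join representation of its join in `tors Λ` (equivalently, a face
of the canonical join complex `Γ(tors Λ)`): `⋁ A` is irredundant, and `A ≪ B` for every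
irredundant join representation `⋁ B` of the same element. -/
def TorsCJR (A : Set (Set (Mdl Λ))) : Prop :=
  (∀ S ∈ A, IsTorsionClass Λ S) ∧ TorsIrredundant Λ A ∧
    ∀ B : Set (Set (Mdl Λ)), (∀ S ∈ B, IsTorsionClass Λ S) →
      TorsJoin Λ B = TorsJoin Λ A → TorsIrredundant Λ B → ∀ a ∈ A, ∃ b ∈ B, a ⊆ b

/-- `M` and `N` are hom-orthogonal: `Hom_Λ(M, N) = 0` and `Hom_Λ(N, M) = 0`. -/
def HomOrthogonal (M N : Mdl Λ) : Prop :=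
  (∀ f : M.carrier →ₗ[Λ] N.carrier, f = 0) ∧ ∀ f : N.carrier →ₗ[Λ] M.carrier, f = 0

/-!
Call a module minimal outside `T` if it is not in `T` but all its proper factors are. Such a
module `M` admits no nonzero map from a module of `T`: the image of the map and the quotient by
it would both lie in `T`, and hence so would `M`. Consequently every nonzero map between two
modules that are minimal outside `T` is injective.

Suppose that `T'` covers `T` and that `M, N ∈ T'` are minimal outside `T`. If there were no
nonzero map `N → M`, the modules of `T'` without nonzero maps to `M` would form a torsion class
containing `T` and `N` but not `M`, so lying strictly between `T` and `T'`. Thus `N` embeds in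
`M`, by symmetry `M` embeds in `N`, and an artinian module is isomorphic to any module with
which it shares mutual embeddings.
-/

section LinearMap

variable {R A B X Z : Type*} [Ring R] [AddCommGroup A] [Module R A] [AddCommGroup B] [Module R B]
  [AddCommGroup X] [Module R X] [AddCommGroup Z] [Module R Z]

theorem exists_comp_eq_of_exact_of_surjective {i : A →ₗ[R] X} {p : X →ₗ[R] B}
    (hip : Function.Exact i p) (hp : Function.Surjective p) {f : X →ₗ[R] Z} (hf : f ∘ₗ i = 0) :
    ∃ g : B →ₗ[R] Z, g ∘ₗ p = f := by
  refine ⟨(LinearMap.range i).liftQ f (LinearMap.range_le_ker_iff.mpr hf) ∘ₗ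
    (hip.linearEquivOfSurjective hp).symm, ?_⟩
  ext x
  simp

theorem nonempty_linearEquiv_of_injective_of_injective [IsArtinian R A] {f : B →ₗ[R] A}
    {g : A →ₗ[R] B} (hf : Function.Injective f) (hg : Function.Injective g) :
    Nonempty (B ≃ₗ[R] A) := by
  have hfg : Function.Surjective (f ∘ g) :=
    IsArtinian.surjective_of_injective_endomorphism (f ∘ₗ g) (hf.comp hg)
  exact ⟨LinearEquiv.ofBijective f ⟨hf, hfg.of_comp⟩⟩

end LinearMap

section TorsionClass

variable {Λ}
variable {T T' U : Set (Mdl Λ)} {M N : Mdl Λ}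

theorem subset_filtSet (S : Set (Mdl Λ)) : S ⊆ FiltSet Λ S := fun X hX =>
  Filt.step X ⊥ X hX (.of_subsingleton _ (inferInstanceAs (Subsingleton (⊥ : Submodule Λ X))))
    ⟨Submodule.quotEquivOfEqBot ⊥ rfl⟩

namespace IsTorsionClass

theorem inter (hT : IsTorsionClass Λ T) (hU : IsTorsionClass Λ U) : IsTorsionClass Λ (T ∩ U) where
  fin X hX := hT.fin X hX.1
  zero_mem X hX := ⟨hT.zero_mem X hX, hU.zero_mem X hX⟩
  iso_closed X hX Y e := ⟨hT.iso_closed X hX.1 Y e, hU.iso_closed X hX.2 Y e⟩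
  factor_closed X hX Y p := ⟨hT.factor_closed X hX.1 Y p, hU.factor_closed X hX.2 Y p⟩
  ext_closed A hA B hB X h := ⟨hT.ext_closed A hA.1 B hB.1 X h, hU.ext_closed A hA.2 B hB.2 X h⟩

theorem mem_of_submodule_of_quotient (hT : IsTorsionClass Λ T) (P : Submodule Λ M)
    (hP : Mdl.of Λ P ∈ T) (hMP : Mdl.of Λ (M ⧸ P) ∈ T) : M ∈ T :=
  hT.ext_closed _ hP _ hMP M ⟨P.subtype, P.mkQ, P.injective_subtype, P.mkQ_surjective,
    P.range_subtype.trans P.ker_mkQ.symm⟩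

end IsTorsionClass

/-- The left Hom-orthogonal class `{X ∈ mod Λ : Hom_Λ(X, Z) = 0 for all Z ∈ F}`, the counterpart
of `Perp`. -/
def leftPerp (F : Set (Mdl Λ)) : Set (Mdl Λ) :=
  {X | Module.Finite Λ X ∧ ∀ Z ∈ F, ∀ f : X →ₗ[Λ] Z, f = 0}

theorem mem_leftPerp_singleton :
    N ∈ leftPerp {M} ↔ Module.Finite Λ N ∧ ∀ f : N →ₗ[Λ] M, f = 0 := by
  simp only [leftPerp, Set.mem_ofPred_eq, Set.mem_singleton_iff, forall_eq]

theorem isTorsionClass_leftPerp (F : Set (Mdl Λ)) : IsTorsionClass Λ (leftPerp F) := by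
  have factor_mem : ∀ X ∈ leftPerp F, ∀ Y, IsFactor Λ X Y → Y ∈ leftPerp F := by
    rintro X ⟨_, hX⟩ Y ⟨p, hp⟩
    refine ⟨.of_surjective p hp, fun Z hZ f => ?_⟩
    rw [← LinearMap.cancel_right hp, hX Z hZ (f ∘ₗ p), LinearMap.zero_comp]
  refine ⟨fun X hX => hX.1, fun X _ => ⟨inferInstance, fun Z _ f => Subsingleton.elim f 0⟩,
    fun X hX Y ⟨e⟩ => factor_mem X hX Y ⟨e, e.surjective⟩, factor_mem, ?_⟩
  rintro A ⟨_, hA⟩ B ⟨_, hB⟩ X ⟨i, p, -, hp, hip⟩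
  have hexact : Function.Exact i p := LinearMap.exact_iff.mpr hip.symm
  refine ⟨.of_exact hexact hp, fun Z hZ f => ?_⟩
  obtain ⟨g, rfl⟩ := exists_comp_eq_of_exact_of_surjective hexact hp (hA Z hZ (f ∘ₗ i))
  rw [hB Z hZ g, LinearMap.zero_comp]

theorem subsingleton_of_mem_leftPerp_singleton_self (hM : M ∈ leftPerp {M}) : Subsingleton M :=
  subsingleton_of_forall_eq 0 (LinearMap.congr_fun ((mem_leftPerp_singleton.mp hM).2 LinearMap.id))

theorem TorsCovers.subset_of_mem (hcov : TorsCovers Λ T' T) (hU : IsTorsionClass Λ U)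
    (hTU : T ⊆ U) (hNT' : N ∈ T') (hNT : N ∉ T) (hNU : N ∈ U) : T' ⊆ U := by
  obtain ⟨hT', -, hTT', hmax⟩ := hcov
  have hlt : T ⊂ T' ∩ U :=
    ⟨Set.subset_inter hTT'.subset hTU, fun hle => hNT (hle ⟨hNT', hNU⟩)⟩
  exact Set.inter_eq_left.mp (hmax _ (hT'.inter hU) hlt Set.inter_subset_left)

theorem isProperFactor_quotient {P : Submodule Λ M} (hP : P ≠ ⊥) :
    IsProperFactor Λ M (Mdl.of Λ (M ⧸ P)) :=
  ⟨P.mkQ, P.mkQ_surjective,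
    fun hinj => hP (P.ker_mkQ.symm.trans (LinearMap.ker_eq_bot.mpr hinj))⟩

theorem isProperFactor_range {f : N →ₗ[Λ] M} (hf : ¬ Function.Injective f) :
    IsProperFactor Λ N (Mdl.of Λ (LinearMap.range f)) :=
  ⟨f.rangeRestrict, f.surjective_rangeRestrict, mt f.injective_rangeRestrict_iff.mp hf⟩

theorem injective_of_ne_zero_of_properFactor_mem
    (hN : ∀ N' : Mdl Λ, IsProperFactor Λ N N' → N' ∈ T) (hTM : T ⊆ leftPerp {M})
    {f : N →ₗ[Λ] M} (hf : f ≠ 0) : Function.Injective f := by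
  by_contra hinj
  have hrange : Mdl.of Λ (LinearMap.range f) ∈ T := hN _ (isProperFactor_range hinj)
  have hsubtype : (LinearMap.range f).subtype = 0 :=
    (mem_leftPerp_singleton.mp (hTM hrange)).2 _
  refine hf (LinearMap.range_eq_bot.mp ?_)
  rw [← (LinearMap.range f).range_subtype, hsubtype, LinearMap.range_zero]

/-- `M` is minimal outside `T`: it does not lie in `T`, but all its proper factors do. -/
structure IsMinimalOutside (T : Set (Mdl Λ)) (M : Mdl Λ) : Prop where
  notMem : M ∉ T
  properFactor_mem : ∀ N : Mdl Λ, IsProperFactor Λ M N → N ∈ T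

namespace IsMinimalOutside

theorem subset_leftPerp (hT : IsTorsionClass Λ T) (hM : IsMinimalOutside T M) :
    T ⊆ leftPerp {M} := by
  intro A hA
  refine mem_leftPerp_singleton.mpr ⟨hT.fin A hA, fun f => ?_⟩
  by_contra hf
  have hrange : Mdl.of Λ (LinearMap.range f) ∈ T :=
    hT.factor_closed A hA _ ⟨f.rangeRestrict, f.surjective_rangeRestrict⟩
  have hquot : Mdl.of Λ (M ⧸ LinearMap.range f) ∈ T :=
    hM.properFactor_mem _ (isProperFactor_quotient (mt LinearMap.range_eq_bot.mp hf))
  exact hM.notMem (hT.mem_of_submodule_of_quotient _ hrange hquot)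

theorem exists_injective_of_torsCovers (hcov : TorsCovers Λ T' T) (hM : IsMinimalOutside T M)
    (hMT' : M ∈ T') (hN : IsMinimalOutside T N) (hNT' : N ∈ T') :
    ∃ f : N →ₗ[Λ] M, Function.Injective f := by
  have ⟨hT', hT, _, _⟩ := hcov
  have hTM : T ⊆ leftPerp {M} := hM.subset_leftPerp hT
  suffices hne : ∃ f : N →ₗ[Λ] M, f ≠ 0 from
    hne.imp fun _ => injective_of_ne_zero_of_properFactor_mem hN.properFactor_mem hTM
  by_contra! hzero
  have hNM : N ∈ leftPerp {M} := mem_leftPerp_singleton.mpr ⟨hT'.fin N hNT', hzero⟩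
  have hMM : M ∈ leftPerp {M} :=
    hcov.subset_of_mem (isTorsionClass_leftPerp {M}) hTM hNT' hN.notMem hNM hMT'
  exact hM.notMem (hT.zero_mem M (subsingleton_of_mem_leftPerp_singleton_self hMM))

end IsMinimalOutside

theorem statement7_general [IsArtinian Λ M] (hcov : TorsCovers Λ T' T)
    (hM : IsMinimalOutside T M) (hMT' : M ∈ T') (hN : IsMinimalOutside T N) (hNT' : N ∈ T') :
    MIso Λ N M := by
  obtain ⟨f, hf⟩ := hM.exists_injective_of_torsCovers hcov hMT' hN hNT'
  obtain ⟨g, hg⟩ := hN.exists_injective_of_torsCovers hcov hNT' hM hMT'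
  exact nonempty_linearEquiv_of_injective_of_injective hf hg

end TorsionClass

/-- Let `T` be a torsion class and `M` an indecomposable module not in
`T` whose proper factors all lie in `T`.  Let `N ∈ Filt(T ∪ {M}) \ T` be such that every
proper factor of `N` lies in `T`.  If `Filt(T ∪ {M})` covers `T` in `tors Λ`, then
`N ≅ M`. -/
theorem statement7 (k : Type) [Field k] (Λ : Type) [Ring Λ] [Algebra k Λ]
    [FiniteDimensional k Λ] (T : Set (Mdl Λ)) (hT : IsTorsionClass Λ T)
    (M : Mdl Λ) (hMfin : Module.Finite Λ M.carrier) (hMindec : Indec Λ M)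
    (hMnotmem : M ∉ T) (hMfac : ∀ N : Mdl Λ, IsProperFactor Λ M N → N ∈ T)
    (N : Mdl Λ) (hNmem : N ∈ FiltSet Λ (insert M T)) (hNnotmem : N ∉ T)
    (hNfac : ∀ N' : Mdl Λ, IsProperFactor Λ N N' → N' ∈ T)
    (hcov : TorsCovers Λ (FiltSet Λ (insert M T)) T) :
    MIso Λ N M := by
  have : IsArtinianRing Λ := IsArtinianRing.of_finite k Λ
  exact statement7_general hcov ⟨hMnotmem, hMfac⟩ (subset_filtSet _ (Set.mem_insert M T))
    ⟨hNnotmem, hNfac⟩ hNmem
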